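/- Let K ⊆ R^d be a pointed full-dimensional polyhedral cone with slack matrix A (rows indexed by extreme rays of K), and let a^i denote the i-th row of A. If v ≠ 0 lies in the row span of A and zeroes(a^i) ⊆ zeroes(v) for some i, then v is a nonzero scalar multiple of a^i. -/

import Mathlib

open Matrix Pointwise

/-- The Euclidean dual cone of `K ⊆ ℝ^d`. -/
def eucDual {d : ℕ} (K : Set (Fin d → ℝ)) : Set (Fin d → ℝ) :=
  {y | ∀ x ∈ K, 0 ≤ x ⬝ᵥ y}

/-- A polyhedral cone: nonnegative combinations of finitely many vectors. -/
def IsPolyhedralCone {d : ℕ} (K : Set (Fin d → ℝ)) : Prop :=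
  ∃ (n : ℕ) (v : Fin n → (Fin d → ℝ)),
    K = {x | ∃ c : Fin n → ℝ, (∀ i, 0 ≤ c i) ∧ x = ∑ i, c i • v i}

/-- The convex cone generated by the vectors `v 0, …, v (n-1)`. -/
def coneGenBy {n : ℕ} {V : Type*} [AddCommMonoid V] [Module ℝ V] (v : Fin n → V) : Set V :=
  {x | ∃ c : Fin n → ℝ, (∀ i, 0 ≤ c i) ∧ x = ∑ i, c i • v i}

/-- `r` generates an extreme ray of the cone `K`. -/
def IsExtremeRayGen {d : ℕ} (K : Set (Fin d → ℝ)) (r : Fin d → ℝ) : Prop :=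
  r ≠ 0 ∧ r ∈ K ∧
    ∀ x ∈ K, ∀ y ∈ K, (∃ c : ℝ, 0 ≤ c ∧ x + y = c • r) →
      (∃ a : ℝ, 0 ≤ a ∧ x = a • r) ∧ (∃ b : ℝ, 0 ≤ b ∧ y = b • r)

/-- The family `v` consists of generators of the distinct extreme rays of `K`,
one generator per extreme ray, covering all extreme rays of `K`. -/
def GensDistinctExtremeRays {d n : ℕ} (K : Set (Fin d → ℝ))
    (v : Fin n → (Fin d → ℝ)) : Prop :=
  (∀ i, IsExtremeRayGen K (v i)) ∧
  (∀ i j, i ≠ j → ∀ c : ℝ, v i ≠ c • v j) ∧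
  (∀ r, IsExtremeRayGen K r → ∃ i, ∃ c : ℝ, 0 < c ∧ r = c • v i)

/-- `M` is a slack matrix of the cone `K`: `M i j = ⟨x i, y j⟩` where the `x i`
generate the distinct extreme rays of `K` and the `y j` generate the distinct
extreme rays of the (Euclidean) dual cone of `K`. -/
def IsSlackMatrix {d n m : ℕ} (M : Matrix (Fin n) (Fin m) ℝ)
    (K : Set (Fin d → ℝ)) : Prop :=
  ∃ (x : Fin n → (Fin d → ℝ)) (y : Fin m → (Fin d → ℝ)),
    GensDistinctExtremeRays K x ∧ GensDistinctExtremeRays (eucDual K) y ∧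
    ∀ i j, M i j = x i ⬝ᵥ y j


theorem aux_closed {d n : ℕ} (v : Fin n → (Fin d → ℝ)) (K : Set (Fin d → ℝ))
    (hK : K = {x | ∃ c : Fin n → ℝ, (∀ i, 0 ≤ c i) ∧ x = ∑ i, c i • v i})
    (hadd : ∀ x ∈ K, ∀ y ∈ K, x + y ∈ K) (hsmul : ∀ a : ℝ, 0 ≤ a → ∀ x ∈ K, a • x ∈ K)
    (hgen : ∀ i, v i ∈ K)
    (hpointed : K ∩ (-K) = {0}) : IsClosed K := by
  have hpt : ∀ x ∈ K, ∀ y ∈ K, x + y = 0 → x = 0 := by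
    intro x hx y hy h
    have : x ∈ K ∩ (-K) := ⟨hx, by
      rw [Set.mem_neg, neg_eq_of_add_eq_zero_right h]; exact hy⟩
    rw [hpointed] at this
    exact this
  have hconv : Convex ℝ (K \ {0}) := by
    rintro x ⟨hx, hx0⟩ y ⟨hy, hy0⟩ a b ha hb hab
    refine ⟨hadd _ (hsmul a ha x hx) _ (hsmul b hb y hy), ?_⟩
    intro h
    have h : a • x + b • y = 0 := h
    have h1 := hpt _ (hsmul a ha x hx) _ (hsmul b hb y hy) h
    have h2 := hpt _ (hsmul b hb y hy) _ (hsmul a ha x hx) (by rw [add_comm]; exact h)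
    rcases smul_eq_zero.1 h1 with h1 | h1
    · rcases smul_eq_zero.1 h2 with h2 | h2
      · linarith
      · exact hy0 h2
    · exact hx0 h1
  have hfin : (v '' {i | v i ≠ 0}).Finite := (Set.toFinite _).image v
  have h0 : (0 : Fin d → ℝ) ∉ convexHull ℝ (v '' {i | v i ≠ 0}) := by
    intro h
    have : convexHull ℝ (v '' {i | v i ≠ 0}) ⊆ K \ {0} := by
      refine _root_.convexHull_min ?_ hconv
      rintro _ ⟨i, hi, rfl⟩
      exact ⟨hgen i, hi⟩
    exact (this h).2 rfl
  obtain ⟨f, u, hfu, hf⟩ := geometric_hahn_banach_point_closed (convex_convexHull ℝ _)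
    (Set.Finite.isCompact_convexHull (𝕜 := ℝ) hfin).isClosed h0
  rw [map_zero] at hfu
  have hfv : ∀ i, v i ≠ 0 → 0 < f (v i) := fun i hi =>
    hfu.trans (hf _ (subset_convexHull ℝ _ ⟨i, hi, rfl⟩))
  have hfv0 : ∀ i, 0 ≤ f (v i) := by
    intro i
    by_cases h : v i = 0
    · simp [h]
    · exact (hfv i h).le
  rw [← closure_subset_iff_isClosed]
  intro w hw
  set T : ℝ := f w + 1
  set D : Set (Fin d → ℝ) := (fun c : Fin n → ℝ => ∑ i, c i • v i) ''
    (Set.Icc 0 (fun i => T / f (v i)))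
  have hDc : IsClosed D := by
    refine (IsCompact.image isCompact_Icc ?_).isClosed
    fun_prop
  have hDK : D ⊆ K := by
    rintro _ ⟨c, hc, rfl⟩
    rw [hK]
    exact ⟨c, fun i => hc.1 i, rfl⟩
  have hKD : {z | f z < T} ∩ K ⊆ D := by
    rintro x ⟨hx, hxK⟩
    rw [hK] at hxK
    obtain ⟨c, hc, rfl⟩ := hxK
    refine ⟨fun i => if v i = 0 then 0 else c i, ⟨fun i => ?_, fun i => ?_⟩, ?_⟩
    · dsimp only
      split_ifs
      · exact le_rfl
      · exact hc i
    · dsimp only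
      split_ifs with h
      · simp [h]
      · rw [le_div_iff₀ (hfv i h)]
        have hx : f (∑ i, c i • v i) < T := hx
        rw [map_sum] at hx
        have := Finset.single_le_sum (f := fun i => f (c i • v i))
          (fun j _ => by simpa using mul_nonneg (hc j) (hfv0 j)) (Finset.mem_univ i)
        simp only [map_smul, smul_eq_mul] at this hx
        linarith
    · refine Finset.sum_congr rfl fun i _ => ?_
      dsimp only
      split_ifs with h
      · simp [h]
      · rfl
  have hopen : IsOpen {z | f z < T} := isOpen_lt f.continuous continuous_const
  have h1 : w ∈ {z | f z < T} ∩ closure K := ⟨by simp [T], hw⟩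
  exact hDK (hDc.closure_subset_iff.2 hKD (hopen.inter_closure h1))

theorem aux_mem {d n m : ℕ} (v : Fin n → (Fin d → ℝ)) (K : Set (Fin d → ℝ))
    (hK : K = {x | ∃ c : Fin n → ℝ, (∀ i, 0 ≤ c i) ∧ x = ∑ i, c i • v i})
    (hpointed : K ∩ (-K) = {0}) (hfull : Submodule.span ℝ K = ⊤)
    (y : Fin m → (Fin d → ℝ))
    (hy : ∀ r, IsExtremeRayGen (eucDual K) r → ∃ i, ∃ c : ℝ, 0 < c ∧ r = c • y i)
    (w : Fin d → ℝ) (hw : ∀ j, 0 ≤ w ⬝ᵥ y j) : w ∈ K := by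
  classical
  have hadd : ∀ x ∈ K, ∀ y ∈ K, x + y ∈ K := by
    rw [hK]
    rintro _ ⟨a, ha, rfl⟩ _ ⟨b, hb, rfl⟩
    exact ⟨a + b, fun i => add_nonneg (ha i) (hb i), by
      simp [add_smul, Finset.sum_add_distrib]⟩
  have hsmul : ∀ a : ℝ, 0 ≤ a → ∀ x ∈ K, a • x ∈ K := by
    rw [hK]
    rintro a ha _ ⟨b, hb, rfl⟩
    exact ⟨a • b, fun i => mul_nonneg ha (hb i), by simp [Finset.smul_sum, mul_smul]⟩
  have hgen : ∀ i, v i ∈ K := by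
    rw [hK]
    intro i
    refine ⟨Pi.single i 1, fun j => ?_, by simp [Pi.single_apply]⟩
    by_cases h : j = i
    · subst h; simp
    · simp [h]
  have hdual : ∀ z, z ∈ eucDual K ↔ ∀ i, 0 ≤ v i ⬝ᵥ z := by
    intro z
    refine ⟨fun h i => h _ (hgen i), fun h x hx => ?_⟩
    rw [hK] at hx
    obtain ⟨c, hc, rfl⟩ := hx
    rw [sum_dotProduct]
    refine Finset.sum_nonneg fun i _ => ?_
    rw [smul_dotProduct]
    exact mul_nonneg (hc i) (h i)
  have hzero : ∀ z, (∀ i, v i ⬝ᵥ z = 0) → z = 0 := by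
    intro z hz
    have h : ∀ x : Fin d → ℝ, x ∈ Submodule.span ℝ K → x ⬝ᵥ z = 0 := by
      intro x hx
      induction hx using Submodule.span_induction with
      | mem x hx =>
        rw [hK] at hx
        obtain ⟨c, hc, rfl⟩ := hx
        rw [sum_dotProduct]
        exact Finset.sum_eq_zero fun i _ => by rw [smul_dotProduct, hz i, smul_zero]
      | zero => simp
      | add a b _ _ ha hb => rw [add_dotProduct, ha, hb, add_zero]
      | smul a b _ hb => rw [smul_dotProduct, hb, smul_zero]
    exact dotProduct_self_eq_zero.1 (h z (by rw [hfull]; trivial))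
  -- the base of the dual cone
  set L : (Fin d → ℝ) →ₗ[ℝ] (Fin n → ℝ) := Matrix.mulVecLin (Matrix.of v)
  have hL : ∀ z i, L z i = v i ⬝ᵥ z := fun z i => rfl
  have hker : LinearMap.ker L = ⊥ := by
    rw [LinearMap.ker_eq_bot']
    intro z hz
    exact hzero z fun i => by rw [← hL, hz]; rfl
  set B : Set (Fin d → ℝ) := L ⁻¹' stdSimplex ℝ (Fin n)
  have hBcomp : IsCompact B :=
    (LinearMap.isClosedEmbedding_of_injective hker).isCompact_preimage
      (isCompact_stdSimplex ℝ (Fin n))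
  have hBconv : Convex ℝ B := (convex_stdSimplex ℝ (Fin n)).linear_preimage L
  have hpos : ∀ z ∈ eucDual K, z ≠ 0 → 0 < ∑ i, L z i := by
    intro z hz hz0
    have hnn : ∀ i ∈ Finset.univ, 0 ≤ L z i := fun i _ => (hdual z).1 hz i
    refine lt_of_le_of_ne (Finset.sum_nonneg hnn) fun h => hz0 ?_
    have := (Finset.sum_eq_zero_iff_of_nonneg hnn).1 h.symm
    exact hzero z fun i => this i (Finset.mem_univ i)
  have hscale : ∀ z ∈ eucDual K, z ≠ 0 → (∑ i, L z i)⁻¹ • z ∈ B := by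
    intro z hz hz0
    have hp := hpos z hz hz0
    refine ⟨fun i => ?_, ?_⟩
    · rw [map_smul]
      exact mul_nonneg (inv_nonneg.2 hp.le) ((hdual z).1 hz i)
    · simp only [map_smul, Pi.smul_apply, smul_eq_mul]
      rw [← Finset.mul_sum, inv_mul_cancel₀ hp.ne']
  have hext : ∀ e ∈ B.extremePoints ℝ, IsExtremeRayGen (eucDual K) e := by
    intro e he
    have heB : e ∈ B := he.1
    have hesum : ∑ i, L e i = 1 := heB.2
    refine ⟨?_, (hdual e).2 heB.1, ?_⟩
    · rintro rfl
      simp at hesum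
    · rintro p hp q hq ⟨c, hc, hpq⟩
      by_cases hp0 : p = 0
      · exact ⟨⟨0, le_rfl, by simp [hp0]⟩, ⟨c, hc, by simpa [hp0] using hpq⟩⟩
      by_cases hq0 : q = 0
      · exact ⟨⟨c, hc, by simpa [hq0] using hpq⟩, ⟨0, le_rfl, by simp [hq0]⟩⟩
      have hs := hpos p hp hp0
      have ht := hpos q hq hq0
      have hpB := hscale p hp hp0
      have hqB := hscale q hq hq0
      set s := ∑ i, L p i
      set t := ∑ i, L q i
      have hst : s + t = c := by
        have h := congrArg (fun z => ∑ i, L z i) hpq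
        simp only [map_add, map_smul, Pi.add_apply, Pi.smul_apply, smul_eq_mul,
          Finset.sum_add_distrib, ← Finset.mul_sum, hesum, mul_one] at h
        exact h
      have hcpos : 0 < c := by linarith
      have hseg : e ∈ openSegment ℝ (s⁻¹ • p) (t⁻¹ • q) := by
        refine ⟨s / c, t / c, div_pos hs hcpos, div_pos ht hcpos, ?_, ?_⟩
        · rw [← add_div, hst, div_self hcpos.ne']
        · rw [smul_smul, smul_smul]
          have e1 : s / c * s⁻¹ = c⁻¹ := by field_simp
          have e2 : t / c * t⁻¹ = c⁻¹ := by field_simp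
          rw [e1, e2, ← smul_add, hpq, smul_smul, inv_mul_cancel₀ hcpos.ne', one_smul]
      have h1 : s⁻¹ • p = e := he.2 hpB hqB hseg
      have h2 : t⁻¹ • q = e := he.2 hqB hpB (by rw [openSegment_symm]; exact hseg)
      refine ⟨⟨s, hs.le, ?_⟩, ⟨t, ht.le, ?_⟩⟩
      · rw [← h1, smul_smul, mul_inv_cancel₀ hs.ne', one_smul]
      · rw [← h2, smul_smul, mul_inv_cancel₀ ht.ne', one_smul]
  have hBw : ∀ b ∈ B, 0 ≤ w ⬝ᵥ b := by
    have hsub : closure (convexHull ℝ (B.extremePoints ℝ)) ⊆ {b | 0 ≤ w ⬝ᵥ b} := by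
      refine closure_minimal (_root_.convexHull_min ?_ ?_) ?_
      · intro e he
        obtain ⟨j, c, hc, rfl⟩ := hy e (hext e he)
        show 0 ≤ w ⬝ᵥ (c • y j)
        rw [dotProduct_smul]
        exact mul_nonneg hc.le (hw j)
      · intro a ha b hb s t hs ht _
        show 0 ≤ w ⬝ᵥ (s • a + t • b)
        rw [dotProduct_add, dotProduct_smul, dotProduct_smul]
        exact add_nonneg (mul_nonneg hs ha) (mul_nonneg ht hb)
      · refine isClosed_le continuous_const ?_
        unfold dotProduct
        fun_prop
    rw [closure_convexHull_extremePoints hBcomp hBconv] at hsub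
    exact hsub
  have hdw : ∀ z ∈ eucDual K, 0 ≤ w ⬝ᵥ z := by
    intro z hz
    by_cases hz0 : z = 0
    · simp [hz0]
    have hp := hpos z hz hz0
    have := hBw _ (hscale z hz hz0)
    rw [dotProduct_smul, smul_eq_mul] at this
    exact nonneg_of_mul_nonneg_right this (inv_pos.2 hp)
  by_contra hwK
  have hKconv : Convex ℝ K := by
    intro a ha b hb s t hs ht _
    exact hadd _ (hsmul s hs a ha) _ (hsmul t ht b hb)
  have hKcl := aux_closed v K hK hadd hsmul hgen hpointed
  obtain ⟨f, u, hfw, hfK⟩ := geometric_hahn_banach_point_closed hKconv hKcl hwK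
  have h0K : (0 : Fin d → ℝ) ∈ K := by
    have : (0 : Fin d → ℝ) ∈ K ∩ (-K) := by rw [hpointed]; rfl
    exact this.1
  have hu : u < 0 := by simpa using hfK 0 h0K
  set z : Fin d → ℝ := fun i => f (Pi.single i 1)
  have hfz : ∀ x, f x = x ⬝ᵥ z := by
    intro x
    conv_lhs => rw [pi_eq_sum_univ' x]
    rw [map_sum]
    unfold dotProduct
    refine Finset.sum_congr rfl fun i _ => ?_
    rw [map_smul, smul_eq_mul]
  have hzK : z ∈ eucDual K := by
    intro x hx
    by_contra hneg
    rw [← hfz] at hneg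
    push Not at hneg
    have := hfK ((u / f x) • x) (hsmul _ (div_nonneg_of_nonpos hu.le hneg.le) x hx)
    rw [map_smul, smul_eq_mul, div_mul_cancel₀ _ hneg.ne] at this
    exact lt_irrefl _ this
  have := hdw z hzK
  rw [← hfz] at this
  linarith

/-- Let `A` be a slack matrix of a pointed full-dimensional polyhedral
cone `K ⊆ ℝ^d` and let `aⁱ` be its `i`-th row. If `v ≠ 0` lies in the row span of `A`
and the zero set of `aⁱ` is contained in that of `v`, then `v` is a nonzero scalar
multiple of `aⁱ`. -/
theorem slack_row_lemma
    {d n m : ℕ} (K : Set (Fin d → ℝ))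
    (hpoly : IsPolyhedralCone K) (hpointed : K ∩ (-K) = {0})
    (hfull : Submodule.span ℝ K = ⊤)
    (A : Matrix (Fin n) (Fin m) ℝ) (hslack : IsSlackMatrix A K)
    (v : Fin m → ℝ) (hv : v ∈ Submodule.span ℝ (Set.range fun i => A i))
    (hvne : v ≠ 0) (i : Fin n) (hz : ∀ j, A i j = 0 → v j = 0) :
    ∃ β : ℝ, β ≠ 0 ∧ v = β • A i := by
  obtain ⟨p, g, hK⟩ := hpoly
  obtain ⟨x, y, hx, hy, hA⟩ := hslack
  have hmem := aux_mem g K hK hpointed hfull y hy.2.2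
  -- represent the vector by a point of the ambient space
  obtain ⟨u, hu⟩ : ∃ u : Fin d → ℝ, ∀ j, v j = u ⬝ᵥ y j := by
    clear hz hvne
    induction hv using Submodule.span_induction with
    | mem a ha =>
      obtain ⟨k, rfl⟩ := ha
      exact ⟨x k, fun j => hA k j⟩
    | zero => exact ⟨0, fun j => by simp⟩
    | add a b _ _ ha hb =>
      obtain ⟨s, hs⟩ := ha
      obtain ⟨t, ht⟩ := hb
      exact ⟨s + t, fun j => by rw [Pi.add_apply, hs, ht, add_dotProduct]⟩
    | smul a b _ hb =>
      obtain ⟨s, hs⟩ := hb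
      exact ⟨a • s, fun j => by rw [Pi.smul_apply, hs, smul_dotProduct]⟩
  have hAnn : ∀ j, 0 ≤ A i j := fun j => by
    rw [hA]; exact (hy.1 j).2.1 _ (hx.1 i).2.1
  obtain ⟨ε, hε, hεle⟩ : ∃ ε : ℝ, 0 < ε ∧ ∀ j, ε * |v j| ≤ A i j := by
    have key : ∀ j, ∀ᶠ ε : ℝ in nhdsWithin 0 (Set.Ioi 0), ε * |v j| ≤ A i j := by
      intro j
      rcases (hAnn j).eq_or_lt with h | h
      · refine Filter.Eventually.of_forall fun ε => ?_
        rw [hz j h.symm, ← h]; simp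
      · have ht : Filter.Tendsto (fun ε : ℝ => ε * |v j|) (nhdsWithin 0 (Set.Ioi 0)) (nhds 0) := by
          have : Filter.Tendsto (fun ε : ℝ => ε * |v j|) (nhds 0) (nhds (0 * |v j|)) :=
            (continuous_id.mul continuous_const).tendsto 0
          rw [zero_mul] at this
          exact this.mono_left nhdsWithin_le_nhds
        exact (ht.eventually_lt_const h).mono fun _ h => h.le
    have hall := (Filter.eventually_all.2 key).and self_mem_nhdsWithin
    obtain ⟨ε, h1, h2⟩ := hall.exists
    exact ⟨ε, h2, h1⟩
  have h1 : x i + ε • u ∈ K := by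
    refine hmem _ fun j => ?_
    rw [add_dotProduct, smul_dotProduct, ← hA, ← hu, smul_eq_mul]
    have := hεle j
    have := mul_le_mul_of_nonneg_left (neg_abs_le (v j)) hε.le
    linarith
  have h2 : x i - ε • u ∈ K := by
    refine hmem _ fun j => ?_
    rw [sub_dotProduct, smul_dotProduct, ← hA, ← hu, smul_eq_mul]
    have := hεle j
    have := mul_le_mul_of_nonneg_left (le_abs_self (v j)) hε.le
    linarith
  obtain ⟨⟨a, ha, hax⟩, -⟩ := (hx.1 i).2.2 _ h1 _ h2 ⟨2, by norm_num, by rw [two_smul]; abel⟩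
  have hveq : v = ((a - 1) / ε) • A i := by
    ext j
    have h := congrArg (fun z => z ⬝ᵥ y j) hax
    simp only [add_dotProduct, smul_dotProduct, ← hA, ← hu, smul_eq_mul] at h
    rw [Pi.smul_apply, smul_eq_mul]
    field_simp
    linarith
  refine ⟨(a - 1) / ε, fun h => hvne ?_, hveq⟩
  rw [hveq, h, zero_smul]
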